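/- Assume f satisfies (f_reg), (f_eq), (f_0), and in the case R1 = 0 assume additionally that f satisfies either (f_subl) or (f_subc). Then there exists a constant C > 0 (depending only on f, p, N, R1, R2) such that every radial solution u of the Neumann problem on [R1,R2] satisfies |u(r)| + |u'(r)| ≤ C for all r ∈ [R1,R2]. -/

import Mathlib

open Real Set Filter Topology

noncomputable def phip (p s : ℝ) : ℝ := |s| ^ (p - 2) * s

def Freg (f : ℝ → ℝ) : Prop :=
  ContinuousOn f (Ici 0) ∧ ContDiffOn ℝ 1 f (Ioi 0)

def Feq (f : ℝ → ℝ) : Prop :=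
  f 0 = 0 ∧ f 1 = 0 ∧ (∀ s : ℝ, 0 < s → s < 1 → f s < 0) ∧ (∀ s : ℝ, 1 < s → 0 < f s)

def Fzero (p : ℝ) (f : ℝ → ℝ) : Prop :=
  ∃ c : ℝ, ∀ᶠ s in 𝓝[>] (0:ℝ), c ≤ f s / s ^ (p - 1)

noncomputable def pstar (p : ℝ) (N : ℕ) : EReal :=
  if p < (N:ℝ) then (((N:ℝ) * p / ((N:ℝ) - p) : ℝ) : EReal) else ⊤

noncomputable def fstar (f : ℝ → ℝ) (s : ℝ) : ℝ := sSup (f '' Icc 1 s)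

noncomputable def Fint (f : ℝ → ℝ) (s : ℝ) : ℝ := ∫ σ in (1:ℝ)..s, f σ

def Fsubl (p : ℝ) (f : ℝ → ℝ) : Prop :=
  ∃ M : ℝ, 0 < M ∧ ∀ ε > 0, ∀ᶠ s in atTop, f s / s ^ (p - 1) ≤ M + ε

def FsubcWith (p : ℝ) (N : ℕ) (f : ℝ → ℝ) (η : ℝ) : Prop :=
  (∀ c : ℝ, ∃ᶠ s in atTop, c < f s / s ^ (p - 1)) ∧
  0 < η ∧ η < 1 ∧
  ∃ L : ℝ, (L : EReal) < pstar p N ∧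
    ∀ᶠ s in atTop, fstar f s * s / Fint f (η * s) ≤ L

def Fsubc (p : ℝ) (N : ℕ) (f : ℝ → ℝ) : Prop := ∃ η : ℝ, FsubcWith p N f η

/-- A radial solution of the Neumann problem on `[R1,R2]`. -/
def NeumannSol (p : ℝ) (N : ℕ) (R1 R2 : ℝ) (f u : ℝ → ℝ) : Prop :=
  (∀ x ∈ Icc R1 R2, DifferentiableAt ℝ u x) ∧
  ContinuousOn (deriv u) (Icc R1 R2) ∧
  (∀ x ∈ Icc R1 R2, 0 < u x) ∧
  deriv u R1 = 0 ∧ deriv u R2 = 0 ∧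
  ContinuousOn (fun x => x ^ (N - 1) * phip p (deriv u x)) (Icc R1 R2) ∧
  ∀ x ∈ Ioc R1 R2,
    HasDerivAt (fun t => t ^ (N - 1) * phip p (deriv u t)) (-(x ^ (N - 1)) * f (u x)) x

noncomputable def fhat (f : ℝ → ℝ) (s : ℝ) : ℝ := if 0 ≤ s then f s else 0

noncomputable def Fhat (f : ℝ → ℝ) (s : ℝ) : ℝ := ∫ σ in (1:ℝ)..s, fhat f σ

/-- A solution of the Cauchy problem with datum `d`, for the nonlinearity `g`. -/
def CauchySol (p : ℝ) (N : ℕ) (R1 R2 : ℝ) (g u : ℝ → ℝ) (d : ℝ) : Prop :=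
  (∀ x ∈ Icc R1 R2, DifferentiableAt ℝ u x) ∧
  ContinuousOn (deriv u) (Icc R1 R2) ∧
  u R1 = d ∧ deriv u R1 = 0 ∧
  ContinuousOn (fun x => x ^ (N - 1) * phip p (deriv u x)) (Icc R1 R2) ∧
  ∀ x ∈ Ioc R1 R2,
    HasDerivAt (fun t => t ^ (N - 1) * phip p (deriv u t)) (-(x ^ (N - 1)) * g (u x)) x

noncomputable def rOne (R1 R2 : ℝ) (u : ℝ → ℝ) : ℝ :=
  sSup {x | x ∈ Icc R1 R2 ∧ ∀ s ∈ Ico R1 x, 0 < u s}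

noncomputable def rZero (R2 η d : ℝ) (u : ℝ → ℝ) : ℝ :=
  sSup {x | x ∈ Icc 0 R2 ∧ ∀ s ∈ Ico 0 x, η * d < u s}

noncomputable def energy (p : ℝ) (f u : ℝ → ℝ) (x : ℝ) : ℝ :=
  |deriv u x| ^ p / (p / (p - 1)) + Fhat f (u x)

def NonConstOn (R1 R2 : ℝ) (u : ℝ → ℝ) : Prop :=
  ∃ x ∈ Icc R1 R2, ∃ x' ∈ Icc R1 R2, u x ≠ u x'

def DistinctOn (R1 R2 : ℝ) (u v : ℝ → ℝ) : Prop :=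
  ∃ x ∈ Icc R1 R2, u x ≠ v x

noncomputable def nOverPstar (p : ℝ) (N : ℕ) : ℝ :=
  if p < (N:ℝ) then ((N:ℝ) - p) / p else 0

lemma abs_phip {p : ℝ} (hp : 1 < p) (s : ℝ) : |phip p s| = |s| ^ (p - 1) := by
  rcases eq_or_ne s 0 with rfl | hs
  · simp [phip, Real.zero_rpow (sub_ne_zero.2 hp.ne')]
  · have h : 0 < |s| := abs_pos.2 hs
    rw [phip, abs_mul, abs_of_nonneg (Real.rpow_nonneg h.le _), ← Real.rpow_add_one h.ne']
    congr 1
    ring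

lemma phip_mul_self {p : ℝ} (hp : 1 < p) (s : ℝ) : phip p s * s = |s| ^ p := by
  rcases eq_or_ne s 0 with rfl | hs
  · simp [phip, Real.zero_rpow (by linarith : p ≠ 0)]
  · have h : 0 < |s| := abs_pos.2 hs
    have h2 : s * s = |s| ^ (2 : ℝ) := by
      rw [Real.rpow_two, sq_abs, sq]
    rw [phip, mul_assoc, h2, ← Real.rpow_add h]
    congr 1
    ring

lemma abs_phip_rpow_conj {p : ℝ} (hp : 1 < p) (s : ℝ) :
    |phip p s| ^ (p / (p - 1)) = |s| ^ p := by
  rw [abs_phip hp, ← Real.rpow_mul (abs_nonneg s), mul_div_cancel₀ _ (by linarith)]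

lemma phip_conj_phip {p : ℝ} (hp : 1 < p) (s : ℝ) :
    |phip p s| ^ (p / (p - 1) - 2) * phip p s = s := by
  rcases eq_or_ne s 0 with rfl | hs
  · simp [phip]
  · have h : 0 < |s| := abs_pos.2 hs
    have hp1 : p - 1 ≠ 0 := by linarith
    rw [abs_phip hp, ← Real.rpow_mul h.le, phip, ← mul_assoc, ← Real.rpow_add h]
    have : (p - 1) * (p / (p - 1) - 2) + (p - 2) = 0 := by
      field_simp
      ring
    rw [this, Real.rpow_zero, one_mul]

lemma phip_zero (p : ℝ) : phip p 0 = 0 := by simp [phip]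

lemma phip_nonpos_iff {p s : ℝ} : phip p s ≤ 0 ↔ s ≤ 0 := by
  rcases lt_trichotomy s 0 with h | rfl | h
  · have := Real.rpow_pos_of_pos (abs_pos.2 h.ne) (p - 2)
    exact ⟨fun _ => h.le, fun _ => by unfold phip; nlinarith⟩
  · simp [phip]
  · have := mul_pos (Real.rpow_pos_of_pos (abs_pos.2 h.ne') (p - 2)) h
    exact ⟨fun h' => by unfold phip at h'; linarith, fun h' => by linarith⟩

lemma abs_le_of_abs_phip_le {p s X : ℝ} (hp : 1 < p) (h : |phip p s| ≤ X) :
    |s| ≤ X ^ (1 / (p - 1)) := by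
  have hp1 : p - 1 ≠ 0 := by linarith
  rw [abs_phip hp] at h
  have := Real.rpow_le_rpow (Real.rpow_nonneg (abs_nonneg s) _) h
    (by have : 0 < p - 1 := by linarith
        positivity : 0 ≤ 1 / (p - 1))
  rwa [← Real.rpow_mul (abs_nonneg s), mul_one_div_cancel hp1, Real.rpow_one] at this

lemma le_of_phip_le {p s X : ℝ} (hp : 1 < p) (hX : 0 ≤ X) (h : phip p s ≤ X) :
    s ≤ X ^ (1 / (p - 1)) := by
  rcases le_or_gt s 0 with hs | hs
  · exact hs.trans (Real.rpow_nonneg hX _)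
  · have h' : 0 ≤ phip p s := mul_nonneg (Real.rpow_nonneg (abs_nonneg s) _) hs.le
    exact (le_abs_self s).trans (abs_le_of_abs_phip_le hp (by rwa [abs_of_nonneg h']))

/-- Comparison with the primitive of `K * x ^ n`. -/
lemma sub_le_of_deriv_le_mul_pow {g g' : ℝ → ℝ} {a b K : ℝ} {n : ℕ} (hab : a ≤ b)
    (hg : ContinuousOn g (Icc a b)) (hg' : ∀ x ∈ Ioo a b, HasDerivAt g (g' x) x)
    (hK : ∀ x ∈ Ioo a b, g' x ≤ K * x ^ n) :
    g b - g a ≤ K * (b ^ (n + 1) - a ^ (n + 1)) / (n + 1) := by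
  have hn : ((n : ℝ) + 1) ≠ 0 := by positivity
  have hd : ∀ x ∈ Ioo a b,
      HasDerivAt (fun x => g x - K * x ^ (n + 1) / (n + 1)) (g' x - K * x ^ n) x := by
    intro x hx
    have h1 := ((hasDerivAt_pow (n + 1) x).const_mul K).div_const ((n : ℝ) + 1)
    refine ((hg' x hx).sub h1).congr_deriv ?_
    rw [Nat.add_sub_cancel]
    push_cast
    field_simp
  have hanti : AntitoneOn (fun x => g x - K * x ^ (n + 1) / (n + 1)) (Icc a b) := by
    apply antitoneOn_of_deriv_nonpos (convex_Icc a b)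
    · exact hg.sub (by fun_prop)
    · rw [interior_Icc]
      exact fun x hx => (hd x hx).differentiableAt.differentiableWithinAt
    · rw [interior_Icc]
      intro x hx
      rw [(hd x hx).deriv]
      linarith [hK x hx]
  have := hanti (left_mem_Icc.2 hab) (right_mem_Icc.2 hab) hab
  simp only at this
  have e : K * (b ^ (n + 1) - a ^ (n + 1)) / (n + 1)
      = K * b ^ (n + 1) / (n + 1) - K * a ^ (n + 1) / (n + 1) := by ring
  linarith

/-- The flux `x ^ n * φ_p (u')`. -/
noncomputable def flux (p : ℝ) (n : ℕ) (u : ℝ → ℝ) (x : ℝ) : ℝ := x ^ n * phip p (deriv u x)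

namespace NeumannSol

variable {p R1 R2 : ℝ} {n : ℕ} {f u : ℝ → ℝ}

lemma pos (h : NeumannSol p (n + 1) R1 R2 f u) {x : ℝ} (hx : x ∈ Icc R1 R2) : 0 < u x :=
  h.2.2.1 x hx

lemma continuousOn (h : NeumannSol p (n + 1) R1 R2 f u) : ContinuousOn u (Icc R1 R2) :=
  fun x hx => (h.1 x hx).continuousAt.continuousWithinAt

lemma flux_continuousOn (h : NeumannSol p (n + 1) R1 R2 f u) :
    ContinuousOn (flux p n u) (Icc R1 R2) := h.2.2.2.2.2.1

lemma flux_hasDerivAt (h : NeumannSol p (n + 1) R1 R2 f u) {x : ℝ} (hx : x ∈ Ioc R1 R2) :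
    HasDerivAt (flux p n u) (-(x ^ n) * f (u x)) x := h.2.2.2.2.2.2 x hx

lemma flux_left (h : NeumannSol p (n + 1) R1 R2 f u) : flux p n u R1 = 0 := by
  rw [flux, h.2.2.2.1, phip_zero, mul_zero]

lemma flux_right (h : NeumannSol p (n + 1) R1 R2 f u) : flux p n u R2 = 0 := by
  rw [flux, h.2.2.2.2.1, phip_zero, mul_zero]

lemma flux_sub_le (h : NeumannSol p (n + 1) R1 R2 f u) (hR1 : 0 ≤ R1) {a b K : ℝ}
    (ha : R1 ≤ a) (hab : a ≤ b) (hb : b ≤ R2) (hK : ∀ x ∈ Ioo a b, -K ≤ f (u x)) :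
    flux p n u b - flux p n u a ≤ K * (b ^ (n + 1) - a ^ (n + 1)) / (n + 1) := by
  refine sub_le_of_deriv_le_mul_pow hab (h.flux_continuousOn.mono (Icc_subset_Icc ha hb))
    (fun x hx => h.flux_hasDerivAt ⟨ha.trans_lt hx.1, hx.2.le.trans hb⟩) fun x hx => ?_
  have hx0 : 0 ≤ x ^ n := pow_nonneg ((hR1.trans ha).trans hx.1.le) n
  nlinarith [hK x hx]

lemma le_flux_sub (h : NeumannSol p (n + 1) R1 R2 f u) (hR1 : 0 ≤ R1) {a b B : ℝ}
    (ha : R1 ≤ a) (hab : a ≤ b) (hb : b ≤ R2) (hB : ∀ x ∈ Ioo a b, f (u x) ≤ B) :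
    -(B * (b ^ (n + 1) - a ^ (n + 1)) / (n + 1)) ≤ flux p n u b - flux p n u a := by
  have := sub_le_of_deriv_le_mul_pow (K := B) (n := n) hab
    (h.flux_continuousOn.mono (Icc_subset_Icc ha hb)).neg
    (fun x hx => (h.flux_hasDerivAt ⟨ha.trans_lt hx.1, hx.2.le.trans hb⟩).neg) fun x hx => ?_
  · simp only [Pi.neg_apply] at this
    linarith
  · have hx0 : 0 ≤ x ^ n := pow_nonneg ((hR1.trans ha).trans hx.1.le) n
    nlinarith [hB x hx]

lemma exists_le_one (h : NeumannSol p (n + 1) R1 R2 f u) (hR1 : 0 ≤ R1) (hR : R1 < R2)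
    (hf : ∀ s : ℝ, 1 < s → 0 < f s) : ∃ r ∈ Icc R1 R2, u r ≤ 1 := by
  by_contra! hc
  have hanti : StrictAntiOn (flux p n u) (Icc R1 R2) := by
    apply strictAntiOn_of_deriv_neg (convex_Icc _ _) h.flux_continuousOn
    rw [interior_Icc]
    intro x hx
    rw [(h.flux_hasDerivAt ⟨hx.1, hx.2.le⟩).deriv]
    have h1 : 0 < x ^ n := pow_pos (hR1.trans_lt hx.1) n
    have h2 := mul_pos h1 (hf _ (hc x (Ioo_subset_Icc_self hx)))
    linarith
  have := hanti (left_mem_Icc.2 hR.le) (right_mem_Icc.2 hR.le) hR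
  rw [h.flux_left, h.flux_right] at this
  exact this.false

lemma abs_flux_le (h : NeumannSol p (n + 1) R1 R2 f u) (hR1 : 0 ≤ R1) {K : ℝ} (hK0 : 0 ≤ K)
    (hK : ∀ s : ℝ, 0 < s → -K ≤ f s) {x : ℝ} (hx : x ∈ Icc R1 R2) :
    |flux p n u x| ≤ K * R2 ^ (n + 1) / (n + 1) := by
  have hx0 : 0 ≤ x := hR1.trans hx.1
  have h1 := h.flux_sub_le hR1 le_rfl hx.1 hx.2
    (fun y hy => hK _ (h.pos ⟨hy.1.le, hy.2.le.trans hx.2⟩))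
  have h2 := h.flux_sub_le hR1 hx.1 hx.2 le_rfl
    (fun y hy => hK _ (h.pos ⟨hx.1.trans hy.1.le, hy.2.le⟩))
  rw [h.flux_left] at h1
  rw [h.flux_right] at h2
  have h3 : x ^ (n + 1) ≤ R2 ^ (n + 1) := pow_le_pow_left₀ hx0 hx.2 _
  have h4 : 0 ≤ x ^ (n + 1) := pow_nonneg hx0 _
  have h5 : 0 ≤ R1 ^ (n + 1) := pow_nonneg hR1 _
  have h6 : K * (x ^ (n + 1) - R1 ^ (n + 1)) / (n + 1) ≤ K * R2 ^ (n + 1) / (n + 1) := by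
    gcongr; linarith
  have h7 : K * (R2 ^ (n + 1) - x ^ (n + 1)) / (n + 1) ≤ K * R2 ^ (n + 1) / (n + 1) := by
    gcongr; linarith
  rw [abs_le]
  constructor <;> linarith

/-- Away from the origin the derivative is bounded in terms of a lower bound of `f`. -/
lemma abs_deriv_le (h : NeumannSol p (n + 1) R1 R2 f u) (hp : 1 < p) (hR1 : 0 ≤ R1) {K : ℝ}
    (hK0 : 0 ≤ K) (hK : ∀ s : ℝ, 0 < s → -K ≤ f s) {ρ : ℝ} (hρ : 0 < ρ) {x : ℝ}
    (hx : x ∈ Icc R1 R2) (hρx : ρ ≤ x) :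
    |deriv u x| ≤ (K * R2 ^ (n + 1) / (n + 1) / ρ ^ n) ^ (1 / (p - 1)) := by
  apply abs_le_of_abs_phip_le hp
  have h1 := h.abs_flux_le hR1 hK0 hK hx
  rw [flux, abs_mul, abs_of_nonneg (pow_nonneg (hρ.le.trans hρx) n)] at h1
  rw [le_div_iff₀ (pow_pos hρ n)]
  have : ρ ^ n ≤ x ^ n := pow_le_pow_left₀ hρ.le hρx n
  nlinarith [abs_nonneg (phip p (deriv u x))]

lemma abs_sub_le (h : NeumannSol p (n + 1) R1 R2 f u) {D a b : ℝ} (ha : R1 ≤ a) (hb : b ≤ R2)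
    (hD : ∀ x ∈ Icc a b, |deriv u x| ≤ D) {x y : ℝ} (hx : x ∈ Icc a b) (hy : y ∈ Icc a b) :
    |u y - u x| ≤ D * |y - x| := by
  have := (convex_Icc a b).norm_image_sub_le_of_norm_deriv_le (f := u) (C := D)
    (fun z hz => h.1 z ⟨ha.trans hz.1, hz.2.trans hb⟩) hD hx hy
  simpa [Real.norm_eq_abs] using this

lemma deriv_le_of_zero (h : NeumannSol p (n + 1) 0 R2 f u) (hp : 1 < p) {K : ℝ}
    (hK0 : 0 ≤ K) (hK : ∀ s : ℝ, 0 < s → -K ≤ f s) {x : ℝ} (hx : x ∈ Ioc 0 R2) :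
    deriv u x ≤ (K * R2 / (n + 1)) ^ (1 / (p - 1)) := by
  have hR2 : 0 ≤ R2 := hx.1.le.trans hx.2
  apply le_of_phip_le hp (by positivity)
  have h1 := h.flux_sub_le le_rfl le_rfl hx.1.le hx.2
    (fun y hy => hK _ (h.pos ⟨hy.1.le, hy.2.le.trans hx.2⟩))
  rw [h.flux_left, zero_pow (Nat.succ_ne_zero n), sub_zero, sub_zero, flux, pow_succ] at h1
  have hxn : 0 < x ^ n := pow_pos hx.1 n
  have h2 : phip p (deriv u x) ≤ K * x / (n + 1) := by
    have e : K * (x ^ n * x) / (n + 1) = x ^ n * (K * x / (n + 1)) := by ring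
    rw [e] at h1
    exact le_of_mul_le_mul_left h1 hxn
  refine h2.trans ?_
  gcongr
  exact hx.2

lemma abs_deriv_le_of_zero (h : NeumannSol p (n + 1) 0 R2 f u) (hp : 1 < p) {B r : ℝ}
    (hr : r ≤ R2) (hB : ∀ x ∈ Ioo 0 r, |f (u x)| ≤ B) {x : ℝ} (hx : x ∈ Ioc 0 r) :
    |deriv u x| ≤ (B * x / (n + 1)) ^ (1 / (p - 1)) := by
  apply abs_le_of_abs_phip_le hp
  have h1 := h.flux_sub_le (K := B) le_rfl le_rfl hx.1.le (hx.2.trans hr)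
    (fun y hy => (abs_le.1 (hB y ⟨hy.1, hy.2.trans_le hx.2⟩)).1)
  have h2 := h.le_flux_sub (B := B) le_rfl le_rfl hx.1.le (hx.2.trans hr)
    (fun y hy => (abs_le.1 (hB y ⟨hy.1, hy.2.trans_le hx.2⟩)).2)
  have e : B * (x ^ n * x) / (n + 1) = x ^ n * (B * x / (n + 1)) := by ring
  rw [h.flux_left, zero_pow (Nat.succ_ne_zero n), sub_zero, sub_zero, flux, pow_succ, e]
    at h1 h2
  have hxn : 0 < x ^ n := pow_pos hx.1 n
  rw [← mul_neg] at h2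
  exact abs_le.2 ⟨le_of_mul_le_mul_left h2 hxn, le_of_mul_le_mul_left h1 hxn⟩

/-- To the right of a point where `u ≤ 1`, a solution on a ball is bounded. -/
lemma le_of_le_one (h : NeumannSol p (n + 1) 0 R2 f u) (hp : 1 < p) {K : ℝ}
    (hK0 : 0 ≤ K) (hK : ∀ s : ℝ, 0 < s → -K ≤ f s) {r x : ℝ} (hr : 0 ≤ r) (hrx : r ≤ x)
    (hx : x ≤ R2) (hur : u r ≤ 1) :
    u x ≤ 1 + (K * R2 / (n + 1)) ^ (1 / (p - 1)) * R2 := by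
  have hR2 : 0 ≤ R2 := hr.trans (hrx.trans hx)
  have := (convex_Icc r x).image_sub_le_mul_sub_of_deriv_le
    (C := (K * R2 / (n + 1)) ^ (1 / (p - 1)))
    (h.continuousOn.mono (Icc_subset_Icc hr hx))
    (fun z hz => by
      rw [interior_Icc] at hz
      exact (h.1 z ⟨hr.trans hz.1.le, hz.2.le.trans hx⟩).differentiableWithinAt)
    (fun z hz => by
      rw [interior_Icc] at hz
      exact h.deriv_le_of_zero hp hK0 hK ⟨hr.trans_lt hz.1, hz.2.le.trans hx⟩)
    r (left_mem_Icc.2 hrx) x (right_mem_Icc.2 hrx) hrx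
  have h2 : (K * R2 / (n + 1)) ^ (1 / (p - 1)) * (x - r)
      ≤ (K * R2 / (n + 1)) ^ (1 / (p - 1)) * R2 := by
    gcongr
    linarith
  linarith

/-- If `u 0 > 1`, there is a first point `r` with `u r ≤ 1`, and `u ≤ u 0` up to `r`. -/
lemma exists_first_le_one (h : NeumannSol p (n + 1) 0 R2 f u) (hR2 : 0 < R2)
    (hf : ∀ s : ℝ, 1 < s → 0 < f s) (hd : 1 < u 0) :
    ∃ r ∈ Ioc 0 R2, u r ≤ 1 ∧ (∀ x ∈ Ico 0 r, 1 < u x) ∧ ∀ x ∈ Icc 0 r, u x ≤ u 0 := by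
  obtain ⟨r', hr', hur'⟩ := h.exists_le_one le_rfl hR2 hf
  have hS : IsCompact (Icc 0 R2 ∩ u ⁻¹' Iic 1) :=
    isCompact_Icc.of_isClosed_subset
      (h.continuousOn.preimage_isClosed_of_isClosed isClosed_Icc isClosed_Iic) inter_subset_left
  obtain ⟨r, ⟨hr, hur⟩, hmin⟩ := hS.exists_isLeast ⟨r', hr', hur'⟩
  simp only [mem_preimage, mem_Iic] at hur
  have hr0 : 0 < r := hr.1.lt_of_ne (by rintro rfl; linarith)
  have hgt : ∀ x ∈ Ico 0 r, 1 < u x := by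
    intro x hx
    by_contra! hc
    exact (hmin ⟨⟨hx.1, hx.2.le.trans hr.2⟩, hc⟩).not_gt hx.2
  have hanti : AntitoneOn u (Icc 0 r) := by
    apply antitoneOn_of_deriv_nonpos (convex_Icc _ _)
      (h.continuousOn.mono (Icc_subset_Icc le_rfl hr.2))
    · rw [interior_Icc]
      exact fun x hx => (h.1 x ⟨hx.1.le, hx.2.le.trans hr.2⟩).differentiableWithinAt
    · rw [interior_Icc]
      intro x hx
      have h1 := h.flux_sub_le (K := 0) le_rfl le_rfl hx.1.le (hx.2.le.trans hr.2)
        (fun y hy => by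
          rw [neg_zero]
          exact (hf _ (hgt y ⟨hy.1.le, hy.2.trans hx.2⟩)).le)
      rw [h.flux_left, zero_mul, zero_div, sub_zero, flux] at h1
      exact phip_nonpos_iff.1 (nonpos_of_mul_nonpos_right h1 (pow_pos hx.1 n))
  exact ⟨r, ⟨hr0, hr.2⟩, hur, hgt,
    fun x hx => hanti (left_mem_Icc.2 hr0.le) hx hx.1⟩

/-- A solution on a ball with `u 0 = d` stays above `η * d` on an explicit interval. -/
lemma mul_le_of_le (h : NeumannSol p (n + 1) 0 R2 f u) (hp : 1 < p)
    (hf : ∀ s : ℝ, 1 < s → 0 < f s) {r : ℝ} (hr : r ∈ Ioc 0 R2)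
    (hur : u r ≤ 1) (hgt : ∀ x ∈ Ico 0 r, 1 < u x) (hle : ∀ x ∈ Icc 0 r, u x ≤ u 0)
    {B δ η : ℝ} (hB0 : 0 < B) (hB : ∀ s ∈ Icc 1 (u 0), f s ≤ B) (hη1 : η < 1)
    (hη : 1 < η * u 0) (hδ : 0 < δ)
    (hδB : δ ^ p * B ≤ (n + 1) * ((1 - η) * u 0) ^ (p - 1)) :
    δ < r ∧ ∀ x ∈ Icc 0 δ, η * u 0 ≤ u x := by
  have hu0 : 0 < u 0 := h.pos ⟨le_rfl, hr.1.le.trans hr.2⟩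
  have hp1 : 0 < p - 1 := by linarith
  have key : ∀ x, 0 < x → x ≤ δ → x ≤ r → η * u 0 ≤ u x := by
    intro x hx hxδ hxr
    have hbd : ∀ y ∈ Icc 0 x, |deriv u y| ≤ (B * δ / (n + 1)) ^ (1 / (p - 1)) := by
      intro y hy
      rcases hy.1.eq_or_lt with rfl | hy0
      · rw [h.2.2.2.1, abs_zero]
        positivity
      · refine (h.abs_deriv_le_of_zero hp hr.2 (B := B) ?_ ⟨hy0, hy.2.trans hxr⟩).trans ?_
        · intro z hz
          have hz1 := hgt z ⟨hz.1.le, hz.2⟩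
          rw [abs_of_pos (hf _ hz1)]
          exact hB _ ⟨hz1.le, hle z ⟨hz.1.le, hz.2.le⟩⟩
        · have := hy.2.trans hxδ
          gcongr
    have h1 := h.abs_sub_le le_rfl (hxr.trans hr.2) hbd (left_mem_Icc.2 hx.le)
      (right_mem_Icc.2 hx.le)
    rw [sub_zero, abs_of_pos hx] at h1
    have h2 : (B * δ / (n + 1)) ^ (1 / (p - 1)) * x ≤ (1 - η) * u 0 := by
      calc (B * δ / (n + 1)) ^ (1 / (p - 1)) * x
          ≤ (B * δ / (n + 1)) ^ (1 / (p - 1)) * δ := by gcongr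
        _ = (B * δ / (n + 1) * δ ^ (p - 1)) ^ (1 / (p - 1)) := by
          rw [Real.mul_rpow (by positivity) (by positivity), ← Real.rpow_mul hδ.le,
            mul_one_div_cancel hp1.ne', Real.rpow_one]
        _ ≤ (((1 - η) * u 0) ^ (p - 1)) ^ (1 / (p - 1)) := by
          apply Real.rpow_le_rpow (by positivity) _ (by positivity)
          have e : δ ^ p = δ ^ (p - 1) * δ := by
            rw [← Real.rpow_add_one hδ.ne']
            congr 1
            ring
          rw [e] at hδB
          rw [div_mul_eq_mul_div, div_le_iff₀ (by positivity)]
          linarith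
        _ = (1 - η) * u 0 := by
          rw [← Real.rpow_mul (mul_nonneg (by linarith) hu0.le), mul_one_div_cancel hp1.ne',
            Real.rpow_one]
    have := (abs_le.1 h1).1
    linarith
  have hδr : δ < r := by
    by_contra! hc
    linarith [key r hr.1 hc le_rfl]
  refine ⟨hδr, fun x hx => ?_⟩
  rcases hx.1.eq_or_lt with rfl | hx0
  · nlinarith
  · exact key x hx0 hx.2 (hx.2.trans hδr.le)

end NeumannSol

section Nonlinearity

variable {f : ℝ → ℝ}

lemma exists_abs_le (hreg : Freg f) (C : ℝ) : ∃ B : ℝ, 0 < B ∧ ∀ s ∈ Icc 0 C, |f s| ≤ B := by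
  obtain ⟨B, hB⟩ := isCompact_Icc.exists_bound_of_continuousOn
    (hreg.1.mono (fun x (hx : x ∈ Icc 0 C) => hx.1))
  exact ⟨max B 1, by positivity, fun s hs => (hB s hs).trans (le_max_left _ _)⟩

lemma exists_neg_le (hreg : Freg f) (heq : Feq f) : ∃ K : ℝ, 0 ≤ K ∧ ∀ s : ℝ, 0 < s → -K ≤ f s := by
  obtain ⟨B, hB0, hB⟩ := exists_abs_le hreg 1
  refine ⟨B, hB0.le, fun s hs => ?_⟩
  rcases le_or_gt s 1 with h | h
  · exact (abs_le.1 (hB s ⟨hs.le, h⟩)).1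
  · linarith [heq.2.2.2 s h]

lemma hasDerivAt_Fint (hreg : Freg f) {s : ℝ} (hs : 0 < s) : HasDerivAt (Fint f) (f s) s := by
  have hc : ContinuousOn f (Ioi 0) := hreg.1.mono Ioi_subset_Ici_self
  refine intervalIntegral.integral_hasDerivAt_right ?_
    (hc.stronglyMeasurableAtFilter isOpen_Ioi s hs) (hc.continuousAt (Ioi_mem_nhds hs))
  apply ContinuousOn.intervalIntegrable
  refine hc.mono fun x hx => ?_
  exact (lt_min one_pos hs).trans_le hx.1

lemma Fint_strictMonoOn (hreg : Freg f) (heq : Feq f) : StrictMonoOn (Fint f) (Ici 1) := by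
  apply strictMonoOn_of_deriv_pos (convex_Ici 1)
  · exact fun x hx => (hasDerivAt_Fint hreg (one_pos.trans_le hx)).continuousAt.continuousWithinAt
  · rw [interior_Ici]
    intro x hx
    rw [(hasDerivAt_Fint hreg (one_pos.trans hx)).deriv]
    exact heq.2.2.2 x hx

lemma Fint_pos (hreg : Freg f) (heq : Feq f) {s : ℝ} (hs : 1 < s) : 0 < Fint f s := by
  have := Fint_strictMonoOn hreg heq (mem_Ici.2 le_rfl) (mem_Ici.2 hs.le) hs
  rwa [Fint, intervalIntegral.integral_same] at this

lemma exists_abs_Fint_le (hreg : Freg f) (C : ℝ) :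
    ∃ B : ℝ, 0 < B ∧ ∀ s ∈ Ioc 0 C, |Fint f s| ≤ B := by
  obtain ⟨B, hB0, hB⟩ := exists_abs_le hreg (max C 1)
  refine ⟨B * max C 1, by positivity, fun s hs => ?_⟩
  have h1 := intervalIntegral.norm_integral_le_of_norm_le_const (f := f) (a := 1) (b := s)
    (C := B) (fun x hx => hB x ⟨(le_min zero_le_one hs.1.le).trans hx.1.le,
      hx.2.trans (max_le (le_max_right _ _) (hs.2.trans (le_max_left _ _)))⟩)
  refine h1.trans ?_
  gcongr
  rw [abs_le]
  have := hs.2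
  constructor
  · linarith [hs.1, le_max_right C 1]
  · linarith [le_max_left C 1]

lemma le_fstar (hreg : Freg f) {s σ : ℝ} (hσ : σ ∈ Icc 1 s) : f σ ≤ fstar f s := by
  apply le_csSup _ (mem_image_of_mem f hσ)
  exact (isCompact_Icc.image_of_continuousOn
    (hreg.1.mono fun x (hx : x ∈ Icc 1 s) => zero_le_one.trans hx.1)).bddAbove

lemma fstar_pos (hreg : Freg f) (heq : Feq f) {s : ℝ} (hs : 1 < s) : 0 < fstar f s :=
  (heq.2.2.2 s hs).trans_le (le_fstar hreg ⟨hs.le, le_rfl⟩)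

lemma fstar_mono (hreg : Freg f) {s t : ℝ} (hs : 1 ≤ s) (hst : s ≤ t) :
    fstar f s ≤ fstar f t := by
  apply csSup_le ((nonempty_Icc.2 hs).image f)
  rintro _ ⟨σ, hσ, rfl⟩
  exact le_fstar hreg ⟨hσ.1, hσ.2.trans hst⟩

/-- The subcriticality condition, in division-free form. -/
lemma exists_fstar_mul_le {p : ℝ} (hp : 1 < p) {n : ℕ} {η : ℝ} (hreg : Freg f) (heq : Feq f)
    (h : FsubcWith p (n + 1) f η) :
    ∃ L S : ℝ, 0 < L ∧ 1 < S ∧ 1 < η * S ∧ max 0 ((n + 1) / p - 1) * L < n + 1 ∧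
      ∀ s, S ≤ s → fstar f s * s ≤ L * Fint f (η * s) := by
  obtain ⟨-, hη0, hη1, L, hL, hev⟩ := h
  obtain ⟨S, hS⟩ := eventually_atTop.1 hev
  have hp0 : 0 < p := by linarith
  have hS1 : 1 < max S (2 / η) := by
    refine lt_max_of_lt_right ?_
    rw [lt_div_iff₀ hη0]
    linarith
  have hηS : 1 < η * max S (2 / η) := by
    have h1 : η * (2 / η) = 2 := mul_div_cancel₀ _ hη0.ne'
    have h2 : η * (2 / η) ≤ η * max S (2 / η) := by
      gcongr
      exact le_max_right _ _
    linarith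
  refine ⟨max L 1, max S (2 / η), by positivity, hS1, hηS, ?_, fun s hs => ?_⟩
  · rcases le_or_gt ((n : ℝ) + 1) p with hnp | hnp
    · rw [max_eq_left, zero_mul]
      · positivity
      · rw [sub_nonpos, div_le_one hp0]
        exact hnp
    · have ha : 0 < ((n : ℝ) + 1) / p - 1 := by
        rw [sub_pos, one_lt_div hp0]
        exact hnp
      rw [max_eq_right ha.le]
      have hnp' : p < ((n + 1 : ℕ) : ℝ) := by push_cast; exact hnp
      rw [pstar, if_pos hnp', EReal.coe_lt_coe_iff] at hL
      push_cast at hL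
      have hnp0 : 0 < (n : ℝ) + 1 - p := by linarith
      rw [lt_div_iff₀ hnp0] at hL
      rw [div_sub_one hp0.ne', div_mul_eq_mul_div, div_lt_iff₀ hp0]
      rcases max_cases L 1 with ⟨e, -⟩ | ⟨e, -⟩ <;> rw [e]
      · linarith
      · nlinarith
  · have hs1 : 1 < η * s := hηS.trans_le (by gcongr)
    have h1 := hS s ((le_max_left _ _).trans hs)
    have hF := Fint_pos hreg heq hs1
    rw [div_le_iff₀ hF] at h1
    refine h1.trans ?_
    gcongr
    exact le_max_left _ _

lemma exists_fstar_le_rpow (hreg : Freg f) (heq : Feq f) {η L S : ℝ} (hη0 : 0 < η)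
    (hη1 : η < 1) (hL : 0 < L) (hS : 1 < S) (hηS : 1 < η * S)
    (hsub : ∀ s, S ≤ s → fstar f s * s ≤ L * Fint f (η * s)) :
    ∃ C : ℝ, 0 < C ∧ ∀ s, S ≤ s → fstar f s ≤ C * s ^ (L - 1) := by
  have hd : ∀ s, S ≤ s → HasDerivAt (fun s => Fint f (η * s) * s ^ (-L))
      (f (η * s) * η * s ^ (-L) + Fint f (η * s) * (-L * s ^ (-L - 1))) s := by
    intro s hs
    have hs0 : 0 < s := by linarith
    have h1 : HasDerivAt (fun s : ℝ => η * s) η s := by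
      simpa using (hasDerivAt_id s).const_mul η
    exact ((hasDerivAt_Fint hreg (mul_pos hη0 hs0)).comp s h1).mul
      (Real.hasDerivAt_rpow_const (Or.inl hs0.ne'))
  have hanti : AntitoneOn (fun s => Fint f (η * s) * s ^ (-L)) (Ici S) := by
    apply antitoneOn_of_deriv_nonpos (convex_Ici S)
    · exact fun x hx => (hd x hx).continuousAt.continuousWithinAt
    · rw [interior_Ici]
      exact fun x hx => (hd x (mem_Ioi.1 hx).le).differentiableAt.differentiableWithinAt
    · rw [interior_Ici]
      intro x hx
      have hx' : S ≤ x := (mem_Ioi.1 hx).le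
      have hx0 : 0 < x := by linarith
      rw [(hd x hx').deriv]
      have e : x ^ (-L) = x ^ (-L - 1) * x := by
        rw [← Real.rpow_add_one hx0.ne']
        congr 1
        ring
      have h1 : f (η * x) ≤ fstar f x :=
        le_fstar hreg ⟨hηS.le.trans (by gcongr), by nlinarith⟩
      have h0 : 0 < fstar f x * x := mul_pos (fstar_pos hreg heq (hS.trans_le hx')) hx0
      have h2 := hsub x hx'
      have h3 : f (η * x) * η * x - L * Fint f (η * x) ≤ 0 := by
        have : f (η * x) * η * x ≤ fstar f x * x * η := by
          have := mul_le_mul_of_nonneg_right h1 (mul_pos hη0 hx0).le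
          linarith
        nlinarith
      rw [e]
      have h4 := mul_nonpos_of_nonneg_of_nonpos (Real.rpow_nonneg hx0.le (-L - 1)) h3
      linarith
  refine ⟨L * |Fint f (η * S) * S ^ (-L)| + 1, by positivity, fun s hs => ?_⟩
  have hs0 : 0 < s := by linarith
  have h1 := hanti (mem_Ici.2 le_rfl) (mem_Ici.2 hs) hs
  simp only at h1
  have h2 := hsub s hs
  have e1 : s ^ (-L) * s ^ L = 1 := by
    rw [← Real.rpow_add hs0, neg_add_cancel, Real.rpow_zero]
  have e2 : s ^ (L - 1) * s = s ^ L := by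
    rw [← Real.rpow_add_one hs0.ne', sub_add_cancel]
  have hp := Real.rpow_pos_of_pos hs0 L
  have h3 : Fint f (η * s) ≤ |Fint f (η * S) * S ^ (-L)| * s ^ L := by
    calc Fint f (η * s) = Fint f (η * s) * s ^ (-L) * s ^ L := by rw [mul_assoc, e1, mul_one]
      _ ≤ |Fint f (η * S) * S ^ (-L)| * s ^ L := by
        gcongr
        exact h1.trans (le_abs_self _)
  refine le_of_mul_le_mul_right ?_ hs0
  rw [mul_assoc, e2]
  nlinarith

end Nonlinearity

lemma exists_rpow_le_of_subcritical {p : ℝ} (hp : 1 < p) {n : ℕ} {f : ℝ → ℝ} (hreg : Freg f)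
    (heq : Feq f) {L S C : ℝ} (hS : 1 < S) (hC : 0 < C)
    (hL : max 0 ((n + 1) / p - 1) * L < n + 1)
    (hfC : ∀ s, S ≤ s → fstar f s ≤ C * s ^ (L - 1)) :
    ∃ c θ : ℝ, 0 < c ∧ 0 < θ ∧ ∀ s, S ≤ s →
      c * s ^ θ ≤ (s ^ (p - 1) / fstar f s) ^ (((n : ℝ) + 1) / p) * (fstar f s * s) := by
  have hp0 : 0 < p := by linarith
  set ν : ℝ := ((n : ℝ) + 1) / p with hν
  have hν0 : 0 < ν := by positivity
  have hpν : p * ν = n + 1 := mul_div_cancel₀ _ hp0.ne'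
  have expand : ∀ s, S ≤ s → (s ^ (p - 1) / fstar f s) ^ ν * (fstar f s * s)
      = s ^ ((p - 1) * ν + 1) * fstar f s ^ (1 - ν) := by
    intro s hs
    have hs0 : 0 < s := by linarith
    have hB := fstar_pos hreg heq (hS.trans_le hs)
    rw [Real.div_rpow (by positivity) hB.le, ← Real.rpow_mul hs0.le, Real.rpow_add_one hs0.ne',
      Real.rpow_sub hB, Real.rpow_one]
    ring
  rcases le_or_gt ν 1 with h1 | h1
  · have hb := fstar_pos hreg heq hS
    refine ⟨fstar f S ^ (1 - ν), (p - 1) * ν + 1, by positivity, ?_, fun s hs => ?_⟩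
    · have : 0 < p - 1 := by linarith
      positivity
    · have hs0 : 0 < s := by linarith
      rw [expand s hs, mul_comm]
      gcongr
      exact fstar_mono hreg hS.le hs
  · rw [max_eq_right (by linarith)] at hL
    refine ⟨C ^ (1 - ν), n + 1 - (ν - 1) * L, by positivity, by linarith, fun s hs => ?_⟩
    have hs0 : 0 < s := by linarith
    have hB := fstar_pos hreg heq (hS.trans_le hs)
    rw [expand s hs]
    have h2 := Real.rpow_le_rpow_of_nonpos hB (hfC s hs) (by linarith : 1 - ν ≤ 0)
    rw [Real.mul_rpow hC.le (by positivity), ← Real.rpow_mul hs0.le] at h2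
    calc C ^ (1 - ν) * s ^ (n + 1 - (ν - 1) * L)
        = s ^ ((p - 1) * ν + 1) * (C ^ (1 - ν) * s ^ ((L - 1) * (1 - ν))) := by
          rw [mul_left_comm, ← Real.rpow_add hs0]
          congr 2
          linear_combination -hpν
      _ ≤ _ := by gcongr

/-- The Pohozaev functional. -/
noncomputable def pohozaev (p : ℝ) (n : ℕ) (a : ℝ) (f u : ℝ → ℝ) (x : ℝ) : ℝ :=
  x ^ (n + 1) * (|deriv u x| ^ p / (p / (p - 1)) + Fint f (u x)) + a * (flux p n u x * u x)

namespace NeumannSol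

variable {p R2 : ℝ} {n : ℕ} {f u : ℝ → ℝ}

lemma pohozaev_continuousOn (h : NeumannSol p (n + 1) 0 R2 f u) (hp : 1 < p) (hreg : Freg f)
    (a : ℝ) : ContinuousOn (pohozaev p n a f u) (Icc 0 R2) := by
  have h1 : ContinuousOn (fun x => |deriv u x| ^ p) (Icc 0 R2) :=
    h.2.1.abs.rpow_const fun x _ => Or.inr (by linarith)
  have h2 : ContinuousOn (fun x => Fint f (u x)) (Icc 0 R2) := fun x hx =>
    (hasDerivAt_Fint hreg (h.pos hx)).continuousAt.comp_continuousWithinAt (h.continuousOn x hx)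
  exact ((continuousOn_id.pow (n + 1)).mul ((h1.div_const _).add h2)).add
    (continuousOn_const.mul (h.flux_continuousOn.mul h.continuousOn))

lemma phip_hasDerivAt (h : NeumannSol p (n + 1) 0 R2 f u) {x : ℝ} (hx : x ∈ Ioc 0 R2) :
    HasDerivAt (fun y => phip p (deriv u y)) (-f (u x) - n * phip p (deriv u x) / x) x := by
  have hx0 : x ≠ 0 := hx.1.ne'
  have h1 : HasDerivAt (fun y => flux p n u y / y ^ n)
      (-f (u x) - n * phip p (deriv u x) / x) x := by
    refine ((h.flux_hasDerivAt hx).div (hasDerivAt_pow n x) (pow_ne_zero n hx0)).congr_deriv ?_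
    rw [flux]
    cases n with
    | zero => simp
    | succ m =>
      rw [Nat.add_sub_cancel]
      push_cast
      field_simp
      ring
  refine h1.congr_of_eventuallyEq ?_
  filter_upwards [isOpen_ne.mem_nhds hx0] with y hy
  rw [flux, mul_div_cancel_left₀ _ (pow_ne_zero n hy)]

lemma pohozaev_hasDerivAt (h : NeumannSol p (n + 1) 0 R2 f u) (hp : 1 < p) (hreg : Freg f)
    (a : ℝ) {x : ℝ} (hx : x ∈ Ioc 0 R2) :
    HasDerivAt (pohozaev p n a f u)
      (x ^ n * ((n + 1) * Fint f (u x) - a * (f (u x) * u x)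
        + (a + 1 - (n + 1) / p) * |deriv u x| ^ p)) x := by
  have hx' : x ∈ Icc 0 R2 := ⟨hx.1.le, hx.2⟩
  have hx0 : x ≠ 0 := hx.1.ne'
  have hp0 : p ≠ 0 := by linarith
  have hp1 : 0 < p - 1 := by linarith
  have hq : 1 < p / (p - 1) := by rw [one_lt_div hp1]; linarith
  have hu := (h.1 x hx').hasDerivAt
  have h1 : HasDerivAt (fun y => |deriv u y| ^ p / (p / (p - 1)))
      (deriv u x * (-f (u x) - n * phip p (deriv u x) / x)) x := by
    have := ((hasDerivAt_abs_rpow (phip p (deriv u x)) hq).comp x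
      (h.phip_hasDerivAt hx)).div_const (p / (p - 1))
    simp only [Function.comp_def, abs_phip_rpow_conj hp] at this
    refine this.congr_deriv ?_
    rw [mul_assoc (p / (p - 1)), phip_conj_phip hp]
    field_simp
  have h2 : HasDerivAt (fun y => Fint f (u y)) (f (u x) * deriv u x) x :=
    (hasDerivAt_Fint hreg (h.pos hx')).comp x hu
  refine (((hasDerivAt_pow (n + 1) x).mul (h1.add h2)).add
    (((h.flux_hasDerivAt hx).mul hu).const_mul a)).congr_deriv ?_
  rw [Nat.add_sub_cancel, flux, Pi.add_apply, ← phip_mul_self hp]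
  push_cast
  field_simp
  ring

lemma le_pohozaev_sub (h : NeumannSol p (n + 1) 0 R2 f u) (hp : 1 < p) (hreg : Freg f)
    {a m s t : ℝ} (ha : (n + 1) / p - 1 ≤ a) (hs : 0 ≤ s) (hst : s ≤ t) (ht : t ≤ R2)
    (hm : ∀ x ∈ Ioo s t, m ≤ (n + 1) * Fint f (u x) - a * (f (u x) * u x)) :
    m * (t ^ (n + 1) - s ^ (n + 1)) / (n + 1)
      ≤ pohozaev p n a f u t - pohozaev p n a f u s := by
  have := sub_le_of_deriv_le_mul_pow (K := -m) (n := n) hst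
    ((h.pohozaev_continuousOn hp hreg a).mono (Icc_subset_Icc hs ht)).neg
    (fun x hx => (h.pohozaev_hasDerivAt hp hreg a ⟨hs.trans_lt hx.1, hx.2.le.trans ht⟩).neg)
    fun x hx => ?_
  · simp only [Pi.neg_apply, neg_mul, neg_div] at this
    linarith
  · have hx0 : 0 ≤ x ^ n := pow_nonneg (hs.trans hx.1.le) n
    have h1 := mul_nonneg (by linarith : 0 ≤ a + 1 - (n + 1) / p)
      (Real.rpow_nonneg (abs_nonneg (deriv u x)) p)
    have h2 := mul_nonneg hx0 (by linarith [hm x hx] :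
      0 ≤ (n + 1) * Fint f (u x) - a * (f (u x) * u x)
        + (a + 1 - (n + 1) / p) * |deriv u x| ^ p - m)
    linarith

lemma pohozaev_zero (h : NeumannSol p (n + 1) 0 R2 f u) (a : ℝ) :
    pohozaev p n a f u 0 = 0 := by
  simp [pohozaev, h.flux_left]

lemma pohozaev_right (h : NeumannSol p (n + 1) 0 R2 f u) (hp : 1 < p) (a : ℝ) :
    pohozaev p n a f u R2 = R2 ^ (n + 1) * Fint f (u R2) := by
  rw [pohozaev, h.flux_right, h.2.2.2.2.1, abs_zero, Real.zero_rpow (by linarith)]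
  ring

/-- The derivative bound follows from a bound of the initial value. -/
lemma abs_add_abs_deriv_le (hp : 1 < p) (hR2 : 0 < R2) (hreg : Freg f) (heq : Feq f) {D : ℝ}
    (hD : ∀ u, NeumannSol p (n + 1) 0 R2 f u → u 0 ≤ D) :
    ∃ C : ℝ, 0 < C ∧ ∀ u : ℝ → ℝ, NeumannSol p (n + 1) 0 R2 f u →
      ∀ x ∈ Icc 0 R2, |u x| + |deriv u x| ≤ C := by
  obtain ⟨K, hK0, hK⟩ := exists_neg_le hreg heq
  set C1 := 1 + (K * R2 / (n + 1)) ^ (1 / (p - 1)) * R2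
  obtain ⟨B, hB0, hB⟩ := exists_abs_le hreg (max D C1)
  have hC1 : 0 < max D C1 := by
    have : 0 < C1 := by positivity
    exact lt_max_of_lt_right this
  refine ⟨max D C1 + (B * R2 / (n + 1)) ^ (1 / (p - 1)), by positivity, fun u h x hx => ?_⟩
  have hle : ∀ y ∈ Icc 0 R2, u y ≤ max D C1 := by
    intro y hy
    rcases le_or_gt (u 0) 1 with h0 | h0
    · exact (h.le_of_le_one hp hK0 hK le_rfl hy.1 hy.2 h0).trans (le_max_right _ _)
    · obtain ⟨r, hr, hur, -, hru⟩ := h.exists_first_le_one hR2 heq.2.2.2 h0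
      rcases le_total y r with hyr | hyr
      · exact (hru y ⟨hy.1, hyr⟩).trans ((hD u h).trans (le_max_left _ _))
      · exact (h.le_of_le_one hp hK0 hK hr.1.le hyr hy.2 hur).trans (le_max_right _ _)
  rw [abs_of_pos (h.pos hx)]
  refine add_le_add (hle x hx) ?_
  rcases hx.1.eq_or_lt with rfl | hx0
  · rw [h.2.2.2.1, abs_zero]
    positivity
  · refine (h.abs_deriv_le_of_zero hp le_rfl (B := B) (fun y hy => ?_) ⟨hx0, hx.2⟩).trans ?_
    · have hy' := Ioo_subset_Icc_self hy
      exact hB _ ⟨(h.pos hy').le, hle y hy'⟩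
    · have : 0 < p - 1 := by linarith
      gcongr
      exact hx.2

lemma exists_init_le_of_Fsubl (hp : 1 < p) (hR2 : 0 < R2) (hreg : Freg f) (heq : Feq f)
    (hf : Fsubl p f) : ∃ D : ℝ, ∀ u, NeumannSol p (n + 1) 0 R2 f u → u 0 ≤ D := by
  have hp0 : 0 < p := by linarith
  have hp1 : 0 < p - 1 := by linarith
  obtain ⟨K, hK0, hK⟩ := exists_neg_le hreg heq
  obtain ⟨M, hM0, hM⟩ := hf
  obtain ⟨S, hS⟩ := eventually_atTop.1 (hM 1 one_pos)
  obtain ⟨B, hB0, hB⟩ := exists_abs_le hreg S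
  set A := M + 1 + B with hA
  have hA0 : 0 < A := by positivity
  have hfA : ∀ s, 1 ≤ s → f s ≤ A * s ^ (p - 1) := by
    intro s hs
    have hs0 : 0 < s := by linarith
    have h1 : 1 ≤ s ^ (p - 1) := Real.one_le_rpow hs hp1.le
    rcases le_total S s with h | h
    · have h2 := hS s h
      rw [div_le_iff₀ (by positivity)] at h2
      nlinarith
    · have h2 := (abs_le.1 (hB s ⟨hs0.le, h⟩)).2
      nlinarith
  set δ : ℝ := ((n + 1) * (1 / 2) ^ (p - 1) / A) ^ (1 / p) with hδ
  have hδ0 : 0 < δ := by positivity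
  have hδp : δ ^ p = (n + 1) * (1 / 2) ^ (p - 1) / A := by
    rw [hδ, ← Real.rpow_mul (by positivity), one_div_mul_cancel hp0.ne', Real.rpow_one]
  set D := (K * R2 ^ (n + 1) / (n + 1) / δ ^ n) ^ (1 / (p - 1))
  have hD0 : 0 ≤ D := by positivity
  refine ⟨2 + 2 * (D * R2), fun u h => ?_⟩
  rcases le_or_gt (u 0) 2 with h2 | h2
  · have : 0 ≤ D * R2 := by positivity
    linarith
  obtain ⟨r, hr, hur, hgt, hru⟩ := h.exists_first_le_one hR2 heq.2.2.2 (by linarith)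
  obtain ⟨hδr, hδu⟩ := h.mul_le_of_le hp heq.2.2.2 hr hur hgt hru (B := A * u 0 ^ (p - 1))
    (η := 1 / 2) (by positivity)
    (fun s hs => (hfA s hs.1).trans (by have := hs.1; have := hs.2; gcongr)) (by norm_num)
    (by linarith) hδ0 (by
      have e : (1 - 1 / 2 : ℝ) = 1 / 2 := by norm_num
      rw [hδp, e, Real.mul_rpow (by norm_num) (by linarith)]
      apply le_of_eq
      field_simp)
  have h3 := h.abs_sub_le hδ0.le hr.2
    (fun x hx => h.abs_deriv_le hp le_rfl hK0 hK hδ0 ⟨hδ0.le.trans hx.1, hx.2.trans hr.2⟩ hx.1)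
    (right_mem_Icc.2 hδr.le) (left_mem_Icc.2 hδr.le)
  have h4 := hδu δ (right_mem_Icc.2 hδ0.le)
  have h5 : D * |δ - r| ≤ D * R2 := by
    gcongr
    rw [abs_le]
    constructor <;> linarith [hr.1, hr.2]
  linarith [(abs_le.1 h3).2]

lemma exists_init_le_of_Fsubc (hp : 1 < p) (hR2 : 0 < R2) (hreg : Freg f) (heq : Feq f)
    (hf : Fsubc p (n + 1) f) : ∃ D : ℝ, ∀ u, NeumannSol p (n + 1) 0 R2 f u → u 0 ≤ D := by
  have hp0 : 0 < p := by linarith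
  have hp1 : 0 < p - 1 := by linarith
  obtain ⟨η, hf⟩ := hf
  have hη0 := hf.2.1
  have hη1 := hf.2.2.1
  have h1η : 0 < 1 - η := by linarith
  obtain ⟨L, S, hL0, hS, hηS, haL, hsub⟩ := exists_fstar_mul_le hp hreg heq hf
  obtain ⟨C, hC0, hC⟩ := exists_fstar_le_rpow hreg heq hη0 hη1 hL0 hS hηS hsub
  obtain ⟨c, θ, hc0, hθ0, hc⟩ := exists_rpow_le_of_subcritical hp hreg heq hS hC0 haL hC
  obtain ⟨K, hK0, hK⟩ := exists_neg_le hreg heq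
  set a : ℝ := max 0 ((n + 1) / p - 1) with ha
  have ha0 : 0 ≤ a := le_max_left _ _
  have hap : (n + 1) / p - 1 ≤ a := le_max_right _ _
  set C1 := 1 + (K * R2 / (n + 1)) ^ (1 / (p - 1)) * R2
  obtain ⟨G, hG0, hG⟩ := exists_abs_Fint_le hreg C1
  obtain ⟨G', hG'0, hG'⟩ := exists_abs_Fint_le hreg S
  obtain ⟨B, hB0, hB⟩ := exists_abs_le hreg S
  have hmain : ∀ s t, S ≤ s → η * s ≤ t → t ≤ s →
      ((n + 1) / L - a) * (fstar f s * s) ≤ (n + 1) * Fint f t - a * (f t * t) := by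
    intro s t hs hst hts
    have h1 : 1 < η * s := hηS.trans_le (by gcongr)
    have h2 : Fint f (η * s) ≤ Fint f t :=
      (Fint_strictMonoOn hreg heq).monotoneOn (mem_Ici.2 h1.le) (mem_Ici.2 (h1.le.trans hst)) hst
    have h3 : f t * t ≤ fstar f s * s := by
      have := le_fstar hreg (f := f) ⟨h1.le.trans hst, hts⟩
      have := fstar_pos hreg heq (hS.trans_le hs)
      have : 0 < t := by linarith
      gcongr
    have h4 : ((n : ℝ) + 1) / L * (fstar f s * s) ≤ (n + 1) * Fint f t := by
      rw [div_mul_eq_mul_div, div_le_iff₀ hL0, mul_assoc, mul_comm (Fint f t)]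
      refine mul_le_mul_of_nonneg_left ?_ (by positivity)
      exact (hsub s hs).trans (mul_le_mul_of_nonneg_left h2 hL0.le)
    have h5 := mul_le_mul_of_nonneg_left h3 ha0
    linarith
  have hκ : 0 < ((n : ℝ) + 1) / L - a := by
    rw [sub_pos, lt_div_iff₀ hL0]
    exact haL
  set Q := (n + 1) * G' + a * (B * S) with hQ
  have hQ0 : 0 ≤ Q := by positivity
  have hlow : ∀ t, 0 < t → -Q ≤ (n + 1) * Fint f t - a * (f t * t) := by
    intro t ht
    rcases le_total S t with h | h
    · have h1 := hmain t t h (by nlinarith) le_rfl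
      have h2 := mul_pos hκ (mul_pos (fstar_pos hreg heq (hS.trans_le h)) ht)
      linarith
    · have h1 := (abs_le.1 (hG' t ⟨ht, h⟩)).1
      have h2 : f t * t ≤ B * S := by
        have := (abs_le.1 (hB t ⟨ht.le, h⟩)).2
        gcongr
      have h3 := mul_le_mul_of_nonneg_left h2 ha0
      have h4 := mul_le_mul_of_nonneg_left h1 (by positivity : (0 : ℝ) ≤ n + 1)
      linarith
  set k : ℝ := (((n : ℝ) + 1) / L - a) * ((n + 1) * (1 - η) ^ (p - 1)) ^ (((n : ℝ) + 1) / p) * c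
    with hk
  have hk0 : 0 < k := by positivity
  have hlim : Tendsto (fun s : ℝ => k * s ^ θ) atTop atTop :=
    (tendsto_rpow_atTop hθ0).const_mul_atTop hk0
  obtain ⟨D, hD⟩ := eventually_atTop.1
    (hlim.eventually_gt_atTop (R2 ^ (n + 1) * (G * (n + 1) + Q)))
  refine ⟨max D S, fun u h => ?_⟩
  by_contra! hcon
  have hSd : S ≤ u 0 := (le_max_right _ _).trans hcon.le
  have hd := hD (u 0) ((le_max_left _ _).trans hcon.le)
  have hd0 : 0 < u 0 := by linarith
  have hb := fstar_pos hreg heq (hS.trans_le hSd)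
  obtain ⟨r, hr, hur, hgt, hru⟩ := h.exists_first_le_one hR2 heq.2.2.2 (by linarith)
  set δ : ℝ := ((n + 1) * (1 - η) ^ (p - 1) * (u 0 ^ (p - 1) / fstar f (u 0))) ^ (1 / p) with hδ
  have hδ0 : 0 < δ := by positivity
  have hδp : δ ^ p = (n + 1) * (1 - η) ^ (p - 1) * (u 0 ^ (p - 1) / fstar f (u 0)) := by
    rw [hδ, ← Real.rpow_mul (by positivity), one_div_mul_cancel hp0.ne', Real.rpow_one]
  have hδN : δ ^ (n + 1) = ((n + 1) * (1 - η) ^ (p - 1)) ^ (((n : ℝ) + 1) / p)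
      * (u 0 ^ (p - 1) / fstar f (u 0)) ^ (((n : ℝ) + 1) / p) := by
    rw [← Real.mul_rpow (by positivity) (by positivity), ← hδp, ← Real.rpow_mul hδ0.le,
      mul_div_cancel₀ _ hp0.ne', ← Real.rpow_natCast]
    push_cast
    rfl
  obtain ⟨hδr, hδu⟩ := h.mul_le_of_le hp heq.2.2.2 hr hur hgt hru (B := fstar f (u 0))
    hb (fun s hs => le_fstar hreg hs) hη1 (hηS.trans_le (by gcongr)) hδ0 (by
      rw [hδp, Real.mul_rpow h1η.le hd0.le]
      apply le_of_eq
      field_simp)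
  have h1 := h.le_pohozaev_sub hp hreg hap le_rfl hδ0.le (hδr.le.trans hr.2)
    (fun x hx => hmain (u 0) (u x) hSd (hδu x (Ioo_subset_Icc_self hx))
      (hru x ⟨hx.1.le, hx.2.le.trans hδr.le⟩))
  have h2 := h.le_pohozaev_sub hp hreg hap hδ0.le (hδr.le.trans hr.2) le_rfl
    (fun x hx => hlow (u x) (h.pos ⟨hδ0.le.trans hx.1.le, hx.2.le⟩))
  rw [h.pohozaev_right hp] at h2
  rw [h.pohozaev_zero, sub_zero, zero_pow (Nat.succ_ne_zero n), sub_zero] at h1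
  have hR2I : R2 ∈ Icc 0 R2 := right_mem_Icc.2 hR2.le
  have h3 := (abs_le.1 (hG (u R2) ⟨h.pos hR2I,
    h.le_of_le_one hp hK0 hK hr.1.le hr.2 le_rfl hur⟩)).2
  have h4 := mul_le_mul_of_nonneg_left h3 (pow_nonneg hR2.le (n + 1))
  have hn0 : (0 : ℝ) < n + 1 := by positivity
  have h5 : ((n + 1) / L - a) * (fstar f (u 0) * u 0) * δ ^ (n + 1)
      ≤ R2 ^ (n + 1) * (G * (n + 1) + Q) := by
    have h6 := add_le_add h1 h2
    rw [← add_div, div_le_iff₀ hn0] at h6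
    have h7 := mul_nonneg hQ0 (pow_pos hδ0 (n + 1)).le
    have h8 := mul_le_mul_of_nonneg_right h4 hn0.le
    linarith
  have h6 : k * u 0 ^ θ ≤ ((n + 1) / L - a) * (fstar f (u 0) * u 0) * δ ^ (n + 1) := by
    have h7 := hc (u 0) hSd
    rw [hδN, hk]
    calc _ = (((n : ℝ) + 1) / L - a) * ((n + 1) * (1 - η) ^ (p - 1)) ^ (((n : ℝ) + 1) / p)
          * (c * u 0 ^ θ) := by ring
      _ ≤ (((n : ℝ) + 1) / L - a) * ((n + 1) * (1 - η) ^ (p - 1)) ^ (((n : ℝ) + 1) / p) *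
          ((u 0 ^ (p - 1) / fstar f (u 0)) ^ (((n : ℝ) + 1) / p) * (fstar f (u 0) * u 0)) := by
        gcongr
      _ = _ := by ring
  linarith

lemma exists_bound_of_pos {R1 : ℝ} (hp : 1 < p) (hR1 : 0 < R1) (hR : R1 < R2) (hreg : Freg f)
    (heq : Feq f) : ∃ C : ℝ, 0 < C ∧ ∀ u : ℝ → ℝ, NeumannSol p (n + 1) R1 R2 f u →
      ∀ x ∈ Icc R1 R2, |u x| + |deriv u x| ≤ C := by
  obtain ⟨K, hK0, hK⟩ := exists_neg_le hreg heq
  have hR2 : 0 < R2 := hR1.trans hR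
  set D := (K * R2 ^ (n + 1) / (n + 1) / R1 ^ n) ^ (1 / (p - 1))
  have hD0 : 0 ≤ D := by positivity
  refine ⟨1 + D * R2 + D, by positivity, fun u h x hx => ?_⟩
  have hD : ∀ y ∈ Icc R1 R2, |deriv u y| ≤ D :=
    fun y hy => h.abs_deriv_le hp hR1.le hK0 hK hR1 hy hy.1
  obtain ⟨r, hr, hur⟩ := h.exists_le_one hR1.le hR heq.2.2.2
  have h1 := (abs_le.1 (h.abs_sub_le le_rfl le_rfl hD hr hx)).2
  have h2 : D * |x - r| ≤ D * R2 := by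
    gcongr
    rw [abs_le]
    constructor <;> linarith [hx.1, hx.2, hr.1, hr.2]
  rw [abs_of_pos (h.pos hx)]
  linarith [hD x hx]

end NeumannSol

theorem stmt0 (p : ℝ) (hp : 1 < p) (N : ℕ) (hN : 1 ≤ N)
    (R1 R2 : ℝ) (hR1 : 0 ≤ R1) (hR12 : R1 < R2)
    (f : ℝ → ℝ) (hreg : Freg f) (heq : Feq f) (h0 : Fzero p f)
    (hball : R1 = 0 → Fsubl p f ∨ Fsubc p N f) :
    ∃ C : ℝ, 0 < C ∧ ∀ u : ℝ → ℝ, NeumannSol p N R1 R2 f u →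
      ∀ x ∈ Icc R1 R2, |u x| + |deriv u x| ≤ C := by
  obtain ⟨n, rfl⟩ := Nat.exists_eq_add_of_le' hN
  rcases hR1.eq_or_lt with rfl | hR1
  · obtain ⟨D, hD⟩ : ∃ D : ℝ, ∀ u, NeumannSol p (n + 1) 0 R2 f u → u 0 ≤ D := by
      rcases hball rfl with h | h
      · exact NeumannSol.exists_init_le_of_Fsubl hp hR12 hreg heq h
      · exact NeumannSol.exists_init_le_of_Fsubc hp hR12 hreg heq h
    exact NeumannSol.abs_add_abs_deriv_le hp hR12 hreg heq hD
  · exact NeumannSol.exists_bound_of_pos hp hR1 hR12 hreg heq
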